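/- arXiv:1708.05932 — 2 statements merged into one kernel-verified Lean document; each statement's English description precedes it below -/
import Mathlib

section
/- Decay of the second-moment integral below the information-theoretic threshold: Let f : [0,1] → (0,∞) be continuous with f(0) = 1, define F_δ(m) = δ·log f(m) + log(1−m) for δ > 0 and m ∈ (0,1), and let δ_ℓ = sup{δ > 0 : F_δ(m) < 0 for all m ∈ (0,1]} (with the convention log(1−m) = −∞ at m = 1). Let (n_k) and (d_k) be sequences of natural numbers tending to infinity with n_k/d_k → δ for some δ ∈ (0, δ_ℓ). Then lim_{k→∞} (d_k − 1)/n_k · ∫₀¹ f(m)^{n_k} (1 − m)^{d_k − 2} dm = 0. -/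
noncomputable section
open MeasureTheory Filter Topology

/-- The exponent `F_δ(m) = δ log f(m) + log (1-m)`. -/
def Fdelta (f : ℝ → ℝ) (δ m : ℝ) : ℝ :=
  δ * Real.log (f m) + Real.log (1 - m)

/-- The information-theoretic threshold
`δ_ℓ = sup {δ > 0 : F_δ(m) < 0 for all m ∈ (0,1)}` (the endpoint `m = 1` is
excluded since there `log(1-m) = -∞` by convention, so the condition holds
automatically). -/
def deltaEll (f : ℝ → ℝ) : ℝ :=
  sSup {δ : ℝ | 0 < δ ∧ ∀ m ∈ Set.Ioo (0 : ℝ) 1, Fdelta f δ m < 0}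

/-- **Decay of the second-moment integral below the information-theoretic
threshold.** If `f : [0,1] → (0,∞)` is continuous with `f 0 = 1` and
`n_k/d_k → δ < δ_ℓ`, then `(d_k-1)/n_k ∫₀¹ f(m)^{n_k} (1-m)^{d_k-2} dm → 0`. -/
theorem second_moment_integral_decay
    (f : ℝ → ℝ) (hf_cont : ContinuousOn f (Set.Icc 0 1))
    (hf_pos : ∀ m ∈ Set.Icc (0 : ℝ) 1, 0 < f m) (hf0 : f 0 = 1)
    (n d : ℕ → ℕ) (hn : Tendsto n atTop atTop) (hd : Tendsto d atTop atTop)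
    (δ : ℝ) (hδ_pos : 0 < δ) (hδ : δ < deltaEll f)
    (hratio : Tendsto (fun k => (n k : ℝ) / (d k : ℝ)) atTop (𝓝 δ)) :
    Tendsto (fun k =>
        ((d k : ℝ) - 1) / (n k : ℝ) *
          ∫ m in Set.Icc (0 : ℝ) 1, f m ^ (n k) * (1 - m) ^ (d k - 2))
      atTop (𝓝 0) := by
  obtain ⟨D, ⟨hD0, hD⟩, hδD⟩ : ∃ D ∈ {δ : ℝ | 0 < δ ∧ ∀ m ∈ Set.Ioo (0 : ℝ) 1, Fdelta f δ m < 0},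
      δ < D := by
    apply exists_lt_of_lt_csSup _ hδ
    by_contra hne
    rw [Set.not_nonempty_iff_eq_empty] at hne
    unfold deltaEll at hδ
    rw [hne, Real.sSup_empty] at hδ
    linarith
  have hdR : Tendsto (fun k => (d k : ℝ)) atTop atTop := tendsto_natCast_atTop_atTop.comp hd
  have hnR : Tendsto (fun k => (n k : ℝ)) atTop atTop := tendsto_natCast_atTop_atTop.comp hn
  have hd2 : ∀ᶠ k in atTop, 2 ≤ d k := hd.eventually_ge_atTop 2
  have hn1 : ∀ᶠ k in atTop, 1 ≤ n k := hn.eventually_ge_atTop 1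
  -- the effective exponent tends to infinity
  have he : Tendsto (fun k => (d k : ℝ) - 2 - (n k : ℝ) / D) atTop atTop := by
    have h1 : Tendsto (fun k => 1 - ((n k : ℝ) / (d k : ℝ)) / D) atTop (𝓝 (1 - δ / D)) :=
      tendsto_const_nhds.sub (hratio.div_const D)
    have hpos : 0 < 1 - δ / D := by
      rw [sub_pos, div_lt_one hD0]; exact hδD
    have h2 := tendsto_atTop_add_const_right atTop (-2 : ℝ) (hdR.atTop_mul_pos hpos h1)
    refine h2.congr' ?_
    filter_upwards [hd2] with k hk
    have : (d k : ℝ) ≠ 0 := by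
      have : d k ≠ 0 := by omega
      exact_mod_cast this
    field_simp
    ring
  have hpt : ∀ k, 2 ≤ d k → ∀ m ∈ Set.Ioo (0 : ℝ) 1,
      f m ^ (n k) * (1 - m) ^ (d k - 2) ≤
        Real.exp (((d k : ℝ) - 2 - (n k : ℝ) / D) * Real.log (1 - m)) := by
    intro k hk m hm
    have hfm := hf_pos m ⟨hm.1.le, hm.2.le⟩
    have h1m : 0 < 1 - m := by linarith [hm.2]
    have hF := hD m hm
    unfold Fdelta at hF
    have hpow : f m ^ (n k) * (1 - m) ^ (d k - 2) =
        Real.exp ((n k : ℝ) * Real.log (f m) + ((d k : ℝ) - 2) * Real.log (1 - m)) := by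
      rw [Real.exp_add, Real.exp_nat_mul, Real.exp_log hfm]
      have : (d k : ℝ) - 2 = ((d k - 2 : ℕ) : ℝ) := by
        rw [Nat.cast_sub hk]; norm_num
      rw [this, Real.exp_nat_mul, Real.exp_log h1m]
    rw [hpow, Real.exp_le_exp]
    have hlog : Real.log (f m) ≤ -Real.log (1 - m) / D := by
      rw [le_div_iff₀ hD0]; linarith
    have := mul_le_mul_of_nonneg_left hlog (Nat.cast_nonneg (α := ℝ) (n k))
    have e2 : (n k : ℝ) * (-Real.log (1 - m) / D) = -((n k : ℝ) / D * Real.log (1 - m)) := by ring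
    rw [e2] at this
    linarith
  have hnn : ∀ k, ∀ m ∈ Set.Ioo (0 : ℝ) 1, 0 ≤ f m ^ (n k) * (1 - m) ^ (d k - 2) := by
    intro k m hm
    have hfm := hf_pos m ⟨hm.1.le, hm.2.le⟩
    have h1m : 0 < 1 - m := by linarith [hm.2]
    positivity
  have hint : Tendsto (fun k => ∫ m in Set.Icc (0 : ℝ) 1, f m ^ (n k) * (1 - m) ^ (d k - 2))
      atTop (𝓝 0) := by
    simp only [integral_Icc_eq_integral_Ioo]
    have h0 : (0 : ℝ) = ∫ m in Set.Ioo (0 : ℝ) 1, (0 : ℝ) := by simp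
    suffices hs : Tendsto (fun k => ∫ m in Set.Ioo (0 : ℝ) 1, f m ^ (n k) * (1 - m) ^ (d k - 2))
        atTop (𝓝 (∫ m in Set.Ioo (0 : ℝ) 1, (0 : ℝ))) by
      rwa [← h0] at hs
    refine tendsto_integral_filter_of_dominated_convergence (fun _ => (1 : ℝ)) ?_ ?_ ?_ ?_
    · refine Eventually.of_forall fun k => ?_
      refine ContinuousOn.aestronglyMeasurable ?_ measurableSet_Ioo
      exact ((hf_cont.mono Set.Ioo_subset_Icc_self).pow _).mul (by fun_prop)
    · filter_upwards [hd2, he.eventually_ge_atTop 0] with k hk hek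
      refine (ae_restrict_iff' measurableSet_Ioo).2 (Eventually.of_forall fun m hm => ?_)
      rw [Real.norm_of_nonneg (hnn k m hm)]
      refine (hpt k hk m hm).trans ?_
      rw [Real.exp_le_one_iff]
      exact mul_nonpos_of_nonneg_of_nonpos hek
        (Real.log_nonpos (by linarith [hm.2]) (by linarith [hm.1]))
    · exact integrable_const _
    · refine (ae_restrict_iff' measurableSet_Ioo).2 (Eventually.of_forall fun m hm => ?_)
      have hl : Real.log (1 - m) < 0 := Real.log_neg (by linarith [hm.2]) (by linarith [hm.1])
      have ht : Tendsto (fun k => Real.exp (((d k : ℝ) - 2 - (n k : ℝ) / D) * Real.log (1 - m)))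
          atTop (𝓝 0) := Real.tendsto_exp_atBot.comp (he.atTop_mul_const_of_neg hl)
      refine tendsto_of_tendsto_of_tendsto_of_le_of_le' tendsto_const_nhds ht
        (Eventually.of_forall fun k => hnn k m hm) ?_
      filter_upwards [hd2] with k hk using hpt k hk m hm
  have hpre : Tendsto (fun k => ((d k : ℝ) - 1) / (n k : ℝ)) atTop (𝓝 (δ⁻¹ - 0)) := by
    refine ((hratio.inv₀ hδ_pos.ne').sub (tendsto_inv_atTop_zero.comp hnR)).congr fun k => ?_
    simp only [Function.comp, inv_div]
    ring
  simpa using hpre.mul hint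
end
end

section
/- Finiteness of the information-theoretic threshold for non-degenerate real sensing models: Let p(y|g) be a conditional density on ℝ × ℝ, let G ~ N(0,1), and define f : [−1,1] → ℝ by f(m) = ∫_ℝ E[p(y|G₁) p(y|G₂)] / E[p(y|G)] dy, where G₁, W are i.i.d. N(0,1) and G₂ = m·G₁ + √(1−m²)·W; set F_δ(m) = δ·log f(m) + (1/2)·log(1−m²) and δ_ℓ = sup{δ > 0 : F_δ(m) < 0 for all m ∈ [−1,1] \ {0}}. Then f(1) = 1 + ∫_ℝ Var_G(p(y|G)) / E_G[p(y|G)] dy; consequently, if ∫_ℝ Var_G(p(y|G)) / E_G[p(y|G)] dy > 0 (i.e., p(y|·) is not almost surely constant in G on a set of y of positive measure), then there exists m* ∈ (0,1) with f(m*) > 1 and δ_ℓ ≤ −log(1 − m*²)/(2·log f(m*)) + 1 < ∞. -/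
noncomputable section
open MeasureTheory ProbabilityTheory Filter Topology

/-- `E_G[p(y | G)]` for `G ~ N(0,1)`. -/
def EpR (p : ℝ → ℝ → ℝ) (y : ℝ) : ℝ :=
  ∫ g, p y g ∂(gaussianReal 0 1)

/-- `Var_G(p(y|G)) = E[p(y|G)²] - (E[p(y|G)])²` for `G ~ N(0,1)`. -/
def VarG (p : ℝ → ℝ → ℝ) (y : ℝ) : ℝ :=
  (∫ g, p y g ^ 2 ∂(gaussianReal 0 1)) - (EpR p y) ^ 2

/-- The second-moment function
`f(m) = ∫ E[p(y|G₁) p(y|G₂)] / E[p(y|G)] dy`, where `G, G₁, W` are i.i.d.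
`N(0,1)` and `G₂ = m G₁ + √(1-m²) W`. -/
def fR (p : ℝ → ℝ → ℝ) (m : ℝ) : ℝ :=
  ∫ y, (∫ g, p y g.1 * p y (m * g.1 + Real.sqrt (1 - m ^ 2) * g.2)
        ∂((gaussianReal 0 1).prod (gaussianReal 0 1))) / EpR p y

/-- `F_δ(m) = δ log f(m) + (1/2) log (1-m²)`. -/
def FdeltaR (p : ℝ → ℝ → ℝ) (δ m : ℝ) : ℝ :=
  δ * Real.log (fR p m) + (1 / 2) * Real.log (1 - m ^ 2)

/-- The set of `δ > 0` at which weak recovery is information-theoretically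
impossible (at the endpoints `m = ±1` one has `log(1-m²) = -∞`, so the
condition holds automatically there; we thus quantify over `m ∈ (-1,1)`,
`m ≠ 0`). -/
def lowerSet (p : ℝ → ℝ → ℝ) : Set ℝ :=
  {δ : ℝ | 0 < δ ∧ ∀ m ∈ Set.Ioo (-1 : ℝ) 1, m ≠ 0 → FdeltaR p δ m < 0}

/-- The information-theoretic threshold `δ_ℓ`. -/
def deltaEllR (p : ℝ → ℝ → ℝ) : ℝ :=
  sSup (lowerSet p)

/-- **Finiteness of the information-theoretic threshold for non-degenerate
real sensing models.**  One has
`f(1) = 1 + ∫ Var_G(p(y|G))/E_G[p(y|G)] dy`; consequently, if this variance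
integral is strictly positive, there is `m* ∈ (0,1)` with `f(m*) > 1` and
`δ_ℓ ≤ -log(1-m*²)/(2 log f(m*)) + 1 < ∞`. -/
theorem deltaEll_finite_real
    (p : ℝ → ℝ → ℝ) (hp_meas : Measurable (Function.uncurry p))
    (hp_nonneg : ∀ y g, 0 ≤ p y g)
    (hp_dens : ∀ g, ∫ y, p y g = 1)
    -- the relevant integrals are assumed finite, and `f` continuous on `[0,1]`
    (h_int0 : ∀ y, Integrable (fun g => p y g ^ 2) (gaussianReal 0 1))
    (h_int1 : Integrable (fun y => EpR p y))
    (h_int2 : Integrable (fun y => VarG p y / EpR p y))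
    (hf_cont : ContinuousOn (fR p) (Set.Icc 0 1)) :
    (fR p 1 = 1 + ∫ y, VarG p y / EpR p y) ∧
    (0 < ∫ y, VarG p y / EpR p y →
      ∃ ms ∈ Set.Ioo (0 : ℝ) 1, 1 < fR p ms ∧
        BddAbove (lowerSet p) ∧
        deltaEllR p ≤ -Real.log (1 - ms ^ 2) / (2 * Real.log (fR p ms)) + 1) := by
  have hf1 : fR p 1 = 1 + ∫ y, VarG p y / EpR p y := by
    have hE : ∫ y, EpR p y = 1 := by
      have hint : Integrable (Function.uncurry fun g y => p y g)
          ((gaussianReal 0 1).prod volume) := by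
        have hm : Measurable (Function.uncurry fun g y => p y g) :=
          hp_meas.comp measurable_swap
        rw [integrable_prod_iff hm.aestronglyMeasurable]
        constructor
        · refine Filter.Eventually.of_forall fun g => ?_
          refine Integrable.of_integral_ne_zero ?_
          simp [Function.uncurry, hp_dens g]
        · have : (fun g => ∫ y, ‖Function.uncurry (fun g y => p y g) (g, y)‖) = fun _ => 1 := by
            funext g
            simp [Function.uncurry, abs_of_nonneg (hp_nonneg _ _), hp_dens g]
          rw [this]
          exact integrable_const _
      unfold EpR
      rw [← integral_integral_swap hint]
      simp [hp_dens]
    have hpt : ∀ y, (∫ g, p y g.1 * p y (1 * g.1 + Real.sqrt (1 - 1 ^ 2) * g.2)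
        ∂((gaussianReal 0 1).prod (gaussianReal 0 1))) / EpR p y
        = EpR p y + VarG p y / EpR p y := by
      intro y
      have h1 : (∫ g, p y g.1 * p y (1 * g.1 + Real.sqrt (1 - 1 ^ 2) * g.2)
        ∂((gaussianReal 0 1).prod (gaussianReal 0 1)))
          = ∫ g, p y g ^ 2 ∂(gaussianReal 0 1) := by
        have := integral_fun_fst (μ := gaussianReal 0 1) (ν := gaussianReal 0 1)
          (fun g => p y g ^ 2)
        simp only [probReal_univ, one_smul] at this
        rw [← this]
        congr 1
        funext g
        simp [sq]
      rw [h1]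
      unfold VarG
      by_cases h : EpR p y = 0
      · simp [h]
      · field_simp
        ring
    unfold fR
    simp_rw [hpt]
    rw [integral_add h_int1 h_int2, hE]
  refine ⟨hf1, fun hpos => ?_⟩
  have hgt : 1 < fR p 1 := by linarith
  have hc : ContinuousWithinAt (fR p) (Set.Ioo 0 1) 1 :=
    (hf_cont 1 (by simp)).mono Set.Ioo_subset_Icc_self
  have hne : (𝓝[Set.Ioo (0:ℝ) 1] 1).NeBot := by
    rw [nhdsWithin_Ioo_eq_nhdsLT one_pos]
    infer_instance
  obtain ⟨ms, hms, hmem⟩ := ((hc.eventually (lt_mem_nhds hgt)).and self_mem_nhdsWithin).exists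
  have hlog : 0 < Real.log (fR p ms) := Real.log_pos hms
  have hl2 : Real.log (1 - ms ^ 2) ≤ 0 :=
    Real.log_nonpos (by nlinarith [hmem.1, hmem.2]) (by nlinarith [hmem.1])
  have hb : ∀ δ ∈ lowerSet p,
      δ ≤ -Real.log (1 - ms ^ 2) / (2 * Real.log (fR p ms)) + 1 := by
    intro δ hδ
    have h := hδ.2 ms ⟨by linarith [hmem.1], hmem.2⟩ hmem.1.ne'
    unfold FdeltaR at h
    have : δ ≤ -Real.log (1 - ms ^ 2) / (2 * Real.log (fR p ms)) := by
      rw [le_div_iff₀ (by positivity)]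
      linarith
    linarith
  refine ⟨ms, hmem, hms, ⟨_, hb⟩, Real.sSup_le hb ?_⟩
  have : 0 ≤ -Real.log (1 - ms ^ 2) / (2 * Real.log (fR p ms)) :=
    div_nonneg (by linarith) (by positivity)
  linarith
end
end
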